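/- Let G = H ∗ K be the free product of two groups H and K, with the canonical embeddings of H and of K into G. Then every generating n-tuple (g₁,…,gₙ) of G is Nielsen equivalent to a tuple of the form (h₁,…,h_s, k_{s+1},…,kₙ) for some 0 ≤ s ≤ n, where each of h₁,…,h_s lies in the image of H and each of k_{s+1},…,kₙ lies in the image of K. -/

import Mathlib

/-- An elementary Nielsen transformation on an `n`-tuple of elements of a group:
(T1) invert an entry, (T2) swap two distinct entries, (T3) replace an entry by its
product with another (distinct) entry. -/
inductive NielsenStep {G : Type*} [Group G] {n : ℕ} : (Fin n → G) → (Fin n → G) → Prop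
  | inv (T : Fin n → G) (i : Fin n) : NielsenStep T (Function.update T i (T i)⁻¹)
  | swap (T : Fin n → G) (i j : Fin n) (hij : i ≠ j) : NielsenStep T (T ∘ Equiv.swap i j)
  | mul (T : Fin n → G) (i j : Fin n) (hij : i ≠ j) :
      NielsenStep T (Function.update T i (T i * T j))

/-- Two `n`-tuples of elements of a group are Nielsen equivalent if a finite chain of
elementary Nielsen transformations carries one to the other. -/
def NielsenEquiv {G : Type*} [Group G] {n : ℕ} (T T' : Fin n → G) : Prop :=
  Relation.ReflTransGen NielsenStep T T'

section Nielsen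

/-!
Let `G` be the free product of subgroups `A i`, acting on the tree of cosets of the `A i`. Choose a
finite subtree `S` that contains the base edge and meets its translate by every entry of the
tuple `T`, so that each entry of `T` joins two vertices of `S`. Suppose that `S` has more than one
edge, and fold `S` along the entries of `T`.

* If two edges `x ≠ y` of `S` are identified by the folding, at end points of the same type, then
  Nielsen moves that slide the entries along each other bring the element `u = x * y⁻¹` into the
  group generated by some entries that fix the end point of `x` or equal `u` or `u⁻¹`. Cutting `S`
  between `x` and `y` and translating the half that contains `y` by `u` makes `u * y = x` a common
  edge of both halves, so the new subtree is smaller.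
* If no two edges are identified, then, as in Marshall Hall's theorem, the `A i` act on the edges of
  the folded graph by permutations. As `G` is the free product these actions define one action
  of `G`, and `T` fixes a point of it that `G` moves. So `T` does not generate `G`.

Hence a generating tuple is Nielsen equivalent to one for which `S` is the base edge, and each entry
of such a tuple fixes one of the vertices `A i`, that is, lies in one of the `A i`.
-/

theorem image_update_of_notMem {α β : Type*} [DecidableEq α] (f : α → β) {s : Set α} {a : α}
    (ha : a ∉ s) (b : β) : Function.update f a b '' s = f '' s :=
  Set.image_congr fun _ hj => Function.update_of_ne (ne_of_mem_of_not_mem hj ha) b f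

namespace NielsenEquiv

open Function (update)

variable {G : Type*} [Group G] {n : ℕ} {T T' T'' : Fin n → G}

theorem refl (T : Fin n → G) : NielsenEquiv T T :=
  Relation.ReflTransGen.refl

theorem trans (h : NielsenEquiv T T') (h' : NielsenEquiv T' T'') : NielsenEquiv T T'' :=
  Relation.ReflTransGen.trans h h'

theorem update_inv (T : Fin n → G) (i : Fin n) : NielsenEquiv T (update T i (T i)⁻¹) :=
  .single (.inv T i)

theorem update_mul (T : Fin n → G) {i j : Fin n} (hij : i ≠ j) :
    NielsenEquiv T (update T i (T i * T j)) :=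
  .single (.mul T i j hij)

theorem update_mul_inv (T : Fin n → G) {i j : Fin n} (hij : i ≠ j) :
    NielsenEquiv T (update T i (T i * (T j)⁻¹)) := by
  convert ((update_inv T j).trans (update_mul _ hij)).trans (update_inv _ j) using 1
  ext k
  by_cases hki : k = i
  · subst hki
    simp [hij]
  · by_cases hkj : k = j
    · subst hkj
      simp [hki]
    · simp [hki, hkj]

theorem comp_perm (T : Fin n → G) (σ : Equiv.Perm (Fin n)) : NielsenEquiv T (T ∘ σ) := by
  induction σ using Equiv.Perm.swap_induction_on' with
  | one => exact refl T
  | mul_swap f x y hxy ih => exact ih.trans (.single (.swap _ x y hxy))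

theorem closure_range_le (h : NielsenEquiv T T') :
    Subgroup.closure (Set.range T) ≤ Subgroup.closure (Set.range T') := by
  induction h with
  | refl => exact le_rfl
  | @tail T₁ T₂ _ hstep ih =>
    refine ih.trans ((Subgroup.closure_le _).2 ?_)
    have mem (k : Fin n) : T₂ k ∈ Subgroup.closure (Set.range T₂) :=
      Subgroup.subset_closure ⟨k, rfl⟩
    rintro _ ⟨k, rfl⟩
    cases hstep with
    | inv i =>
      by_cases hk : k = i
      · subst hk
        simpa using mem k
      · simpa [hk] using mem k
    | swap i j hij => simpa using mem (Equiv.swap i j k)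
    | mul i j hij =>
      by_cases hk : k = i
      · subst hk
        simpa [hij.symm] using mul_mem (mem k) (inv_mem (mem j))
      · simpa [hk] using mem k

variable {I : Set (Fin n)} {i : Fin n}

theorem update_mul_of_mem_closure (T : Fin n → G) (hi : i ∉ I) {w : G}
    (hw : w ∈ Subgroup.closure (T '' I)) : NielsenEquiv T (update T i (T i * w)) := by
  induction hw using Subgroup.closure_induction_right with
  | one => simpa using refl T
  | mul_right x _ _ hy ih =>
    obtain ⟨j, hj, rfl⟩ := hy
    have hij : i ≠ j := (ne_of_mem_of_not_mem hj hi).symm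
    simpa [hij.symm, mul_assoc] using ih.trans (update_mul _ hij)
  | mul_inv_cancel x _ _ hy ih =>
    obtain ⟨j, hj, rfl⟩ := hy
    have hij : i ≠ j := (ne_of_mem_of_not_mem hj hi).symm
    simpa [hij.symm, mul_assoc] using ih.trans (update_mul_inv _ hij)

theorem update_mul_mul_of_mem_closure (T : Fin n → G) (hi : i ∉ I) {c d : G}
    (hc : c ∈ Subgroup.closure (T '' I)) (hd : d ∈ Subgroup.closure (T '' I)) :
    NielsenEquiv T (update T i (c * T i * d)) := by
  have left : NielsenEquiv T (update T i (c * T i)) := by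
    have := update_mul_of_mem_closure (update T i (T i)⁻¹) hi (w := c⁻¹)
      (by simpa only [image_update_of_notMem T hi, inv_mem_iff] using hc)
    simpa using ((update_inv T i).trans this).trans (update_inv _ i)
  have right := update_mul_of_mem_closure (update T i (c * T i)) hi (w := d)
    (by simpa only [image_update_of_notMem T hi] using hd)
  simpa using left.trans right

theorem of_forall_eq_mul_mul (fixed : ∀ i ∈ I, T' i = T i)
    (moved : ∀ i ∉ I, ∃ c ∈ Subgroup.closure (T '' I), ∃ d ∈ Subgroup.closure (T '' I),
      T' i = c * T i * d) :
    NielsenEquiv T T' := by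
  classical
  suffices ∀ J : Finset (Fin n), NielsenEquiv T (J.piecewise T' T) by
    simpa using this Finset.univ
  intro J
  induction J using Finset.induction_on with
  | empty => simpa using refl T
  | insert j J hj ih =>
    rw [Finset.piecewise_insert]
    by_cases hjI : j ∈ I
    · have : J.piecewise T' T j = T' j := by simp [hj, fixed j hjI]
      rwa [← this, Function.update_eq_self]
    · obtain ⟨c, hc, d, hd, h⟩ := moved j hjI
      have image_eq : J.piecewise T' T '' I = T '' I := Set.image_congr fun i hi => by
        by_cases hiJ : i ∈ J <;> simp [hiJ, fixed i hi]
      have := update_mul_mul_of_mem_closure (J.piecewise T' T) hjI (image_eq ▸ hc) (image_eq ▸ hd)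
      rw [Finset.piecewise_eq_of_notMem _ _ _ hj, ← h] at this
      exact ih.trans this

end NielsenEquiv

end Nielsen

/-! ### Folding marked tuples -/

section MarkedTuple

variable {G X : Type*} [Group G] [MulAction G X] {n : ℕ}

/-- Every entry of `T` carries `P` to a set that meets `P`. With `P` a finite subtree of a tree on
which the group acts, the size of `P` measures the complexity of `T`. -/
def MovesWithin (T : Fin n → G) (P : Set X) : Prop :=
  ∀ i, ∃ v ∈ P, T i • v ∈ P

theorem MovesWithin.exists_nielsenEquiv {T : Fin n → G} {P P' : Set X} (hT : MovesWithin T P)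
    {I : Set (Fin n)} (hP : ∀ v ∈ P, ∃ c ∈ Subgroup.closure (T '' I), c • v ∈ P')
    (hI : ∀ i ∈ I, ∃ v ∈ P', T i • v ∈ P') :
    ∃ T', NielsenEquiv T T' ∧ MovesWithin T' P' := by
  classical
  choose v hv hTv using hT
  choose c hc hcP' using hP
  refine ⟨fun i => if i ∈ I then T i else c (T i • v i) (hTv i) * T i * (c (v i) (hv i))⁻¹,
    .of_forall_eq_mul_mul (I := I) (fun i hi => by simp [hi]) fun i hi =>
      ⟨_, hc _ (hTv i), _, inv_mem (hc _ (hv i)), by simp [hi]⟩, fun i => ?_⟩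
  by_cases hi : i ∈ I
  · simpa [hi] using hI i hi
  · exact ⟨c (v i) (hv i) • v i, hcP' _ _, by simp [hi, mul_smul, hcP']⟩

/-- A tuple of group elements together with, for each entry `g`, a point `p` and its image `g • p`.
We regard it as a graph on `X` with oriented edges labelled by the entries: the dart `(i, true)`
carries the label `entry i`, the dart `(i, false)` is its reverse, and `target d` is the endpoint
of the dart `d`. -/
structure MarkedTuple (G X : Type*) [Group G] [MulAction G X] (n : ℕ) where
  entry : Fin n → G
  target : Fin n × Bool → X
  entry_smul_target : ∀ i, entry i • target (i, false) = target (i, true)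

theorem MovesWithin.exists_markedTuple {T : Fin n → G} {P : Set X} (hT : MovesWithin T P) :
    ∃ M : MarkedTuple G X n, M.entry = T ∧ ∀ d, M.target d ∈ P := by
  choose v hv hTv using hT
  exact ⟨⟨T, fun d => if d.2 then T d.1 • v d.1 else v d.1, by simp⟩, rfl,
    by rintro ⟨i, _ | _⟩ <;> simp [hv, hTv]⟩

namespace MarkedTuple

/-- The reverse of the dart `d`. -/
def flip (d : Fin n × Bool) : Fin n × Bool := (d.1, !d.2)

@[simp] theorem flip_flip (d : Fin n × Bool) : flip (flip d) = d := by simp [flip]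

theorem eq_or_eq_flip_of_fst_eq {d e : Fin n × Bool} (h : d.1 = e.1) : d = e ∨ d = flip e := by
  obtain ⟨i, a⟩ := d
  obtain ⟨j, b⟩ := e
  subst h
  cases a <;> cases b <;> simp [flip]

variable (M : MarkedTuple G X n)

theorem movesWithin {P : Set X} (hP : ∀ d, M.target d ∈ P) : MovesWithin M.entry P :=
  fun i => ⟨_, hP (i, false), M.entry_smul_target i ▸ hP (i, true)⟩

/-- The label of a dart: it carries the origin of the dart to its target. -/
def label (d : Fin n × Bool) : G := if d.2 then M.entry d.1 else (M.entry d.1)⁻¹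

theorem label_flip (d : Fin n × Bool) : M.label (flip d) = (M.label d)⁻¹ := by
  obtain ⟨i, _ | _⟩ := d <;> simp [label, flip]

theorem label_smul_target_flip (d : Fin n × Bool) :
    M.label d • M.target (flip d) = M.target d := by
  obtain ⟨i, _ | _⟩ := d
  · simp [label, flip, ← M.entry_smul_target]
  · simpa [label, flip] using M.entry_smul_target i

theorem label_mem_closure {I : Set (Fin n)} {d : Fin n × Bool} (hd : d.1 ∈ I) :
    M.label d ∈ Subgroup.closure (M.entry '' I) := by
  have : M.entry d.1 ∈ Subgroup.closure (M.entry '' I) :=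
    Subgroup.subset_closure (Set.mem_image_of_mem _ hd)
  rw [label]
  split
  exacts [this, inv_mem this]

theorem entry_eq_label_or_inv (d : Fin n × Bool) :
    M.entry d.1 = M.label d ∨ M.entry d.1 = (M.label d)⁻¹ := by
  rw [label]
  split <;> simp

/-- Prolong the dart `f` by the group element `a`, moving its target along. -/
def prolong (f : Fin n × Bool) (a : G) : MarkedTuple G X n where
  entry := Function.update M.entry f.1 (if f.2 then a * M.entry f.1 else M.entry f.1 * a⁻¹)
  target := Function.update M.target f (a • M.target f)
  entry_smul_target i := by
    have h := M.entry_smul_target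
    obtain ⟨j, b⟩ := f
    by_cases hij : i = j
    · subst hij
      cases b <;> simp [mul_smul, h]
    · simp [hij, h]

variable {M} {f d : Fin n × Bool} {a : G}

theorem label_prolong_self : (M.prolong f a).label f = a * M.label f := by
  obtain ⟨i, _ | _⟩ := f <;> simp [label, prolong]

theorem label_prolong_of_fst_ne (h : d.1 ≠ f.1) : (M.prolong f a).label d = M.label d := by
  simp [label, prolong, h]

theorem target_prolong_self : (M.prolong f a).target f = a • M.target f := by
  simp [prolong]

theorem target_prolong_of_ne (h : d ≠ f) : (M.prolong f a).target d = M.target d := by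
  simp [prolong, h]

theorem target_prolong_flip_self : (M.prolong f a).target (flip f) = M.target (flip f) :=
  target_prolong_of_ne (by simp [flip, Prod.ext_iff])

theorem target_prolong_mem {P : Set X} (hP : ∀ d, M.target d ∈ P) (hf : a • M.target f ∈ P) (d) :
    (M.prolong f a).target d ∈ P := by
  rcases eq_or_ne d f with rfl | hd
  · rwa [target_prolong_self]
  · rw [target_prolong_of_ne hd]
    exact hP d

theorem nielsenEquiv_prolong {I : Set (Fin n)} (hf : f.1 ∉ I)
    (ha : a ∈ Subgroup.closure (M.entry '' I)) :
    NielsenEquiv M.entry (M.prolong f a).entry := by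
  obtain ⟨i, _ | _⟩ := f
  · simpa [prolong] using
      NielsenEquiv.update_mul_mul_of_mem_closure M.entry hf (one_mem _) (inv_mem ha)
  · simpa [prolong] using
      NielsenEquiv.update_mul_mul_of_mem_closure M.entry hf ha (one_mem _)

section Fold

variable {o : X} {x y z g : G}

variable (M o) in
/-- For a base point `o`, think of `z : G` as an edge issuing from `z • o`. If a dart of `M` with
label `g` has its origin at `z • o`, then the edges `z` and `g * z` are identified in the quotient
of `M`. -/
def FoldStep (z y : G) : Prop :=
  ∃ d, z • o = M.target (flip d) ∧ y = M.label d * z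

variable (M o) in
/-- The equivalence relation generated by `MarkedTuple.FoldStep`. -/
def Folds : G → G → Prop :=
  Relation.ReflTransGen (M.FoldStep o)

theorem label_mul_smul (hd : z • o = M.target (flip d)) :
    (M.label d * z) • o = M.target d := by
  rw [mul_smul, hd, label_smul_target_flip]

theorem foldStep_symm : Std.Symm (M.FoldStep o) where
  symm := by
    rintro z _ ⟨d, hd, rfl⟩
    exact ⟨flip d, by simpa using label_mul_smul hd, by simp [label_flip]⟩

theorem FoldStep.mul_right (h : M.FoldStep o z y) (hg : g ∈ MulAction.stabilizer G o) :
    M.FoldStep o (z * g) (y * g) := by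
  obtain ⟨d, hd, rfl⟩ := h
  exact ⟨d, by rwa [mul_smul, MulAction.mem_stabilizer_iff.1 hg], mul_assoc _ _ _⟩

theorem folds_equivalence : Equivalence (M.Folds o) :=
  have := M.foldStep_symm (o := o)
  ⟨fun _ => .refl, fun h => Std.Symm.symm (r := Relation.ReflTransGen (M.FoldStep o)) _ _ h, .trans⟩

theorem Folds.mul_right (h : M.Folds o z y) (hg : g ∈ MulAction.stabilizer G o) :
    M.Folds o (z * g) (y * g) :=
  Relation.ReflTransGen.lift (· * g) (fun _ _ h => h.mul_right hg) _ _ h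

/-- The new dart `f` is the path `f`, `e` of the old graph, so going back along `e` recovers the
old `f`. -/
theorem Folds.slide {e f : Fin n × Bool} (hef : e.1 ≠ f.1) (h : M.target f = M.target (flip e))
    (hzy : M.Folds o z y) : (M.prolong f (M.label e)).Folds o z y := by
  refine Relation.reflTransGen_closed ?_ _ _ hzy
  set M' := M.prolong f (M.label e)
  have keep {d : Fin n × Bool} (hd : d.1 ≠ f.1) {z : G} (hz : z • o = M.target (flip d)) :
      M'.FoldStep o z (M.label d * z) :=
    ⟨d, hz.trans (target_prolong_of_ne (show flip d ≠ f from mt (congrArg Prod.fst) hd)).symm,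
      by rw [label_prolong_of_fst_ne hd]⟩
  have along {z : G} (hz : z • o = M.target (flip f)) : M'.Folds o z (M.label f * z) := by
    have hzf : z • o = M'.target (flip f) := by
      rwa [target_prolong_flip_self]
    have whole : M'.FoldStep o z (M.label e * (M.label f * z)) :=
      ⟨f, hzf, by rw [label_prolong_self, mul_assoc]⟩
    have back : M'.FoldStep o (M.label e * (M.label f * z)) (M.label f * z) :=
      M'.foldStep_symm.symm _ _ (keep hef (by rw [label_mul_smul hz, h]))
    exact .tail (.single whole) back
  rintro z _ ⟨d, hd, rfl⟩
  by_cases hdf : d.1 = f.1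
  · rcases eq_or_eq_flip_of_fst_eq hdf with rfl | rfl
    · exact along hd
    · refine M'.folds_equivalence.symm ?_
      simpa [label_flip] using along (label_mul_smul hd)
  · exact .single (keep hdf hd)

/-- The component of `w` in the graph `M` is a star: each of its points other than `w` is the origin
of a single dart, whose target is `w`. -/
def IsStarAt (M : MarkedTuple G X n) (w : X) : Prop :=
  ∀ e f : Fin n × Bool, M.target e = w → M.target (flip e) ≠ w → M.target f = M.target (flip e) →
    f = flip e

theorem exists_isStarAt (M : MarkedTuple G X n) {P : Set X} (hP : ∀ d, M.target d ∈ P) (w : X)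
    (hzy : M.Folds o z y) :
    ∃ M' : MarkedTuple G X n, NielsenEquiv M.entry M'.entry ∧ (∀ d, M'.target d ∈ P) ∧
      M'.Folds o z y ∧ M'.IsStarAt w := by
  classical
  induction hk : Finset.card {d | M.target d ≠ w} using Nat.strong_induction_on generalizing M with
  | _ k ih =>
    by_cases star : M.IsStarAt w
    · exact ⟨M, .refl _, hP, hzy, star⟩
    simp only [IsStarAt, not_forall] at star
    obtain ⟨e, f, he, he', hfe, hne⟩ := star
    have hef : e.1 ≠ f.1 := fun h => by
      rcases eq_or_eq_flip_of_fst_eq h.symm with rfl | rfl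
      · exact he' (hfe ▸ he)
      · exact hne rfl
    have target_f : (M.prolong f (M.label e)).target f = w := by
      rw [target_prolong_self, hfe, label_smul_target_flip, he]
    have fewer : Finset.card {d | (M.prolong f (M.label e)).target d ≠ w} < k := by
      rw [← hk]
      refine Finset.card_lt_card (Finset.ssubset_iff_of_subset ?_ |>.2 ⟨f, ?_⟩)
      · intro d
        rcases eq_or_ne d f with rfl | hd
        · simp [target_f]
        · simp [target_prolong_of_ne hd]
      · simp [target_f, hfe, he']
    have mem := target_prolong_mem hP (f := f) (a := M.label e) (by
      rw [hfe, label_smul_target_flip]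
      exact hP e)
    obtain ⟨M', hM', rest⟩ := ih _ fewer _ mem (hzy.slide hef hfe) rfl
    exact ⟨M', (nielsenEquiv_prolong (I := {e.1}) hef.symm (M.label_mem_closure rfl)).trans hM',
      rest⟩

/-- The indices of the edges of `M` joining `w` to itself. -/
def loops (M : MarkedTuple G X n) (w : X) : Set (Fin n) := {i | ∀ b, M.target (i, b) = w}

theorem smul_eq_of_mem_loops {w : X} {i : Fin n} (hi : i ∈ M.loops w) : M.entry i • w = w := by
  simpa only [hi _] using M.entry_smul_target i

theorem mem_loops {w : X} {d : Fin n × Bool} (hd : M.target d = w) (hd' : M.target (flip d) = w) :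
    d.1 ∈ M.loops w := by
  obtain ⟨i, _ | _⟩ := d <;> rintro (_ | _) <;> assumption

theorem IsStarAt.of_folds (hM : M.IsStarAt (x • o)) (h : M.Folds o x y) :
    y • o = x • o ∧ x * y⁻¹ ∈ Subgroup.closure (M.entry '' M.loops (x • o)) ∨
    ∃ e, M.target e = x • o ∧ M.target (flip e) = y • o ∧ y • o ≠ x • o ∧
      x * y⁻¹ * (M.label e)⁻¹ ∈ Subgroup.closure (M.entry '' M.loops (x • o)) := by
  induction h with
  | refl => exact .inl ⟨rfl, by simp⟩
  | @tail z _ _ hstep ih =>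
    obtain ⟨d, hd, rfl⟩ := hstep
    rw [label_mul_smul hd]
    rcases ih with ⟨hz, hmem⟩ | ⟨e, he, he', hz, hmem⟩
    · rw [hd] at hz
      by_cases hdx : M.target d = x • o
      · exact .inl ⟨hdx, by
          simpa [mul_assoc] using mul_mem hmem (inv_mem (M.label_mem_closure (mem_loops hdx hz)))⟩
      · exact .inr ⟨flip d, hz, by simp, hdx, by simpa [label_flip, mul_assoc] using hmem⟩
    · have hde : flip d = flip e := hM e (flip d) he (he' ▸ hz) (hd ▸ he'.symm)
      obtain rfl : d = e := by simpa using congrArg flip hde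
      exact .inl ⟨he, by simpa [mul_assoc] using hmem⟩

theorem Folds.exists_nielsenEquiv (h : M.Folds o x y) {P : Set X} (hP : ∀ d, M.target d ∈ P) :
    ∃ T' : Fin n → G, NielsenEquiv M.entry T' ∧ MovesWithin T' P ∧ ∃ I : Set (Fin n),
      x * y⁻¹ ∈ Subgroup.closure (T' '' I) ∧
      ∀ i ∈ I, T' i • x • o = x • o ∨ T' i = x * y⁻¹ ∨ T' i = (x * y⁻¹)⁻¹ := by
  obtain ⟨M, hNE, hP, h, star⟩ := M.exists_isStarAt hP (x • o) h
  rcases star.of_folds h with ⟨-, hmem⟩ | ⟨e, he, he', hy, hmem⟩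
  · exact ⟨M.entry, hNE, M.movesWithin hP, _, hmem, fun i hi => .inl (smul_eq_of_mem_loops hi)⟩
  set l := x * y⁻¹ * (M.label e)⁻¹ with hl
  have hel : e.1 ∉ M.loops (x • o) := fun hmem => hy (by rw [← he']; exact hmem _)
  have label_e : (M.prolong e l).label e = x * y⁻¹ := by simp [label_prolong_self, hl]
  have l_smul : l • M.target e = M.target e := by
    rw [← M.label_smul_target_flip e, smul_smul, hl, inv_mul_cancel_right, he', smul_smul,
      inv_mul_cancel_right, ← he', M.label_smul_target_flip, he]
  have moves := movesWithin _ (target_prolong_mem hP (l_smul ▸ hP e))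
  refine ⟨(M.prolong e l).entry, hNE.trans (nielsenEquiv_prolong hel hmem), moves,
    {e.1}, label_e ▸ label_mem_closure _ rfl, ?_⟩
  rintro _ rfl
  exact .inr (label_e ▸ entry_eq_label_or_inv _ e)

end Fold

end MarkedTuple

end MarkedTuple

/-! ### Connected subgraphs -/

section Connectivity

variable {V W : Type*} {Γ : SimpleGraph V} {Δ : SimpleGraph W}

theorem connected_induce_of_forall_exists_adj {s : Set V} {b : V} (hb : b ∈ s) (f : V → ℕ)
    (h : ∀ z ∈ s, z ≠ b → ∃ z' ∈ s, Γ.Adj z z' ∧ f z' < f z) : (Γ.induce s).Connected := by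
  have reach : ∀ k, ∀ z : s, f z = k → (Γ.induce s).Reachable z ⟨b, hb⟩ := by
    intro k
    induction k using Nat.strong_induction_on with
    | _ k ih =>
      rintro ⟨z, hz⟩ rfl
      by_cases hzb : z = b
      · subst hzb
        exact .rfl
      · obtain ⟨z', hz', hadj, hlt⟩ := h z hz hzb
        have : (Γ.induce s).Adj ⟨z, hz⟩ ⟨z', hz'⟩ := hadj
        exact this.reachable.trans (ih _ hlt ⟨z', hz'⟩ rfl)
  have : Nonempty s := ⟨⟨b, hb⟩⟩
  exact ⟨fun z z' => (reach _ z rfl).trans (reach _ z' rfl).symm⟩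

theorem connected_induce_image (f : Γ →g Δ) {s : Set V} (hs : (Γ.induce s).Connected) :
    (Δ.induce (f '' s)).Connected :=
  hs.map (SimpleGraph.induceHom f (Set.mapsTo_image f s)) (by
    rintro ⟨_, v, hv, rfl⟩
    exact ⟨⟨v, hv⟩, rfl⟩)

theorem exists_adj_dist_lt (hΓ : Γ.Connected) {x z : V} (h : z ≠ x) :
    ∃ z', Γ.Adj z z' ∧ Γ.dist z' x < Γ.dist z x := by
  obtain ⟨p, hp⟩ := hΓ.exists_walk_length_eq_dist z x
  cases p with
  | nil => exact absurd rfl h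
  | cons hadj q => exact ⟨_, hadj, by simpa [← hp, Nat.lt_succ_iff] using SimpleGraph.dist_le q⟩

theorem exists_connected_induce_compl (hΓ : Γ.Connected) {x y : V} (hxy : x ≠ y) :
    ∃ s : Set V, x ∈ s ∧ y ∉ s ∧ (Γ.induce s).Connected ∧ (Γ.induce sᶜ).Connected := by
  have pos := hΓ.pos_dist_of_ne hxy
  have near {z z' : V} (w : V) (h : Γ.Adj z z') : Γ.dist z w ≤ Γ.dist z' w + 1 := by
    have := hΓ.dist_triangle (u := z) (v := z') (w := w)
    rw [SimpleGraph.dist_eq_one_iff_adj.2 h] at this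
    lia
  refine ⟨{z | Γ.dist z x ≤ Γ.dist z y}, by simp, by simp [SimpleGraph.dist_comm, pos.ne'],
    connected_induce_of_forall_exists_adj (b := x) (by simp) (Γ.dist · x) fun z hz hzx => ?_,
    connected_induce_of_forall_exists_adj (b := y) (by simp [SimpleGraph.dist_comm, pos.ne'])
      (Γ.dist · y) fun z hz hzy => ?_⟩
  · obtain ⟨z', hadj, hlt⟩ := exists_adj_dist_lt hΓ hzx
    have := near y hadj
    simp only [Set.mem_ofPred_eq] at hz ⊢
    exact ⟨z', by lia, hadj, hlt⟩
  · obtain ⟨z', hadj, hlt⟩ := exists_adj_dist_lt hΓ hzy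
    have := near x hadj
    simp only [Set.mem_compl_iff, Set.mem_ofPred_eq] at hz ⊢
    exact ⟨z', by lia, hadj, hlt⟩

theorem exists_connected_partition {S : Set V} (hS : (Γ.induce S).Connected) {x y : V} (hx : x ∈ S)
    (hy : y ∈ S) (hxy : x ≠ y) :
    ∃ s t : Set V, s ∪ t = S ∧ Disjoint s t ∧ x ∈ s ∧ y ∈ t ∧
      (Γ.induce s).Connected ∧ (Γ.induce t).Connected := by
  obtain ⟨s, hxs, hys, hs, ht⟩ := exists_connected_induce_compl hS (x := ⟨x, hx⟩) (y := ⟨y, hy⟩)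
    (by simpa using hxy)
  let incl : Γ.induce S →g Γ := (SimpleGraph.Embedding.induce S).toHom
  exact ⟨Subtype.val '' s, Subtype.val '' sᶜ, by rw [← Set.image_union]; simp,
    (Set.disjoint_image_iff Subtype.val_injective).2 disjoint_compl_right, ⟨_, hxs, rfl⟩,
    ⟨_, hys, rfl⟩, connected_induce_image incl hs, connected_induce_image incl ht⟩

theorem exists_adj_of_connected_induce_union {s t : Set V} (h : (Γ.induce (s ∪ t)).Connected)
    (hst : Disjoint s t) (hs : s.Nonempty) (ht : t.Nonempty) : ∃ x ∈ s, ∃ y ∈ t, Γ.Adj x y := by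
  obtain ⟨x, hx⟩ := hs
  obtain ⟨y, hy⟩ := ht
  obtain ⟨p⟩ := h.preconnected ⟨x, .inl hx⟩ ⟨y, .inr hy⟩
  obtain ⟨d, -, hd, hd'⟩ := p.exists_boundary_dart {z | z.1 ∈ s} hx (hst.notMem_of_mem_right hy)
  exact ⟨_, hd, _, d.snd.2.resolve_left hd', d.adj⟩

end Connectivity

/-! ### Free products and coset graphs -/

section CosetGraph

variable {G ι : Type*} [Group G] (A : ι → Subgroup G)

/-- Distinct elements of `G` are adjacent if they lie in a common left coset of some `A i`. -/
def cosetGraph : SimpleGraph G := .mulCayley (⋃ i, A i)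

variable {A} {x y : G}

theorem cosetGraph_adj : (cosetGraph A).Adj x y ↔ x ≠ y ∧ ∃ i, x⁻¹ * y ∈ A i := by
  have (i : ι) : y⁻¹ * x ∈ A i ↔ x⁻¹ * y ∈ A i := by rw [← inv_mem_iff, mul_inv_rev, inv_inv]
  simp [cosetGraph, SimpleGraph.mulCayley_adj, this]

theorem cosetGraph_reachable_mul_right (x : G) {a : G} {i : ι} (ha : a ∈ A i) :
    (cosetGraph A).Reachable x (x * a) := by
  by_cases h : x = x * a
  · rw [← h]
  · exact SimpleGraph.Adj.reachable (cosetGraph_adj.2 ⟨h, i, by simpa⟩)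

theorem cosetGraph_preconnected (hA : ⨆ i, A i = ⊤) : (cosetGraph A).Preconnected := by
  have reachable_one (g : G) : (cosetGraph A).Reachable 1 g := by
    have hg : g ∈ ⨆ i, A i := hA ▸ Subgroup.mem_top g
    rw [Subgroup.iSup_eq_closure] at hg
    induction hg using Subgroup.closure_induction_right with
    | one => exact .rfl
    | mul_right g _ _ ha ih =>
      obtain ⟨i, ha⟩ := Set.mem_iUnion.1 ha
      exact ih.trans (cosetGraph_reachable_mul_right g ha)
    | mul_inv_cancel g _ _ ha ih =>
      obtain ⟨i, ha⟩ := Set.mem_iUnion.1 ha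
      exact ih.trans (cosetGraph_reachable_mul_right g (inv_mem ha))
  exact fun x y => (reachable_one x).symm.trans (reachable_one y)

theorem connected_induce_smul (u : G) {S : Set G} (hS : ((cosetGraph A).induce S).Connected) :
    ((cosetGraph A).induce ((u * ·) '' S)).Connected :=
  connected_induce_image (Γ := cosetGraph A) ⟨(u * ·), by simp [cosetGraph]⟩ hS

end CosetGraph

section FreeProduct

open scoped Pointwise

variable {G ι : Type*} [Group G] {A : ι → Subgroup G}

/-- `G` is the internal free product of the subgroups `A i`. -/
def IsInternalFreeProduct (A : ι → Subgroup G) : Prop :=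
  Function.Bijective (Monoid.CoprodI.lift fun i => (A i).subtype)

namespace IsInternalFreeProduct

theorem exists_hom {N : Type*} [Group N] (hA : IsInternalFreeProduct A) (f : ∀ i, A i →* N) :
    ∃ Φ : G →* N, ∀ i (a : A i), Φ a = f i a := by
  let e := MulEquiv.ofBijective _ hA
  refine ⟨(Monoid.CoprodI.lift f).comp e.symm.toMonoidHom, fun i a => ?_⟩
  have : e.symm a = Monoid.CoprodI.of (M := fun i => A i) a :=
    e.symm_apply_eq.2 (Monoid.CoprodI.lift_of (fun i => (A i).subtype) a).symm
  simp [this]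

theorem iSup_eq_top (hA : IsInternalFreeProduct A) : ⨆ i, A i = ⊤ := by
  have := Monoid.CoprodI.range_eq_iSup (f := fun i => (A i).subtype)
  simpa [MonoidHom.range_eq_top.2 hA.surjective] using this.symm

end IsInternalFreeProduct

/-- The right translation action of `G` on its subsets, turned into a left action. -/
def translationHom (G : Type*) [Group G] : G →* Equiv.Perm (Set G) :=
  (MulAction.toPermHom Gᵐᵒᵖ (Set G)).comp (MulEquiv.inv' G).toMonoidHom

theorem mem_translationHom {g a : G} {X : Set G} : g ∈ translationHom G a X ↔ g * a ∈ X := by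
  simp [translationHom, Set.mem_smul_set_iff_inv_smul_mem]

variable {S : Set G} {r : ι → Setoid G}

/-- A relative of Marshall Hall's theorem: since `S` is finite and injects into the classes of each
`r i`, the translations of these classes can be conjugated so that they agree on `S`. -/
theorem IsInternalFreeProduct.exists_permRep (hA : IsInternalFreeProduct A) (hS : S.Finite)
    (hr : ∀ i, ∀ a ∈ A i, ∀ x y, r i x y → r i (x * a) (y * a))
    (hrS : ∀ i, ∀ x ∈ S, ∀ y ∈ S, r i x y → x = y) :
    ∃ Φ : G →* Equiv.Perm (Set G), ∀ i, ∀ a ∈ A i, ∀ x ∈ S, ∀ z ∈ S, r i (x * a⁻¹) z →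
      Φ a {x} = {z} := by
  have : Finite S := hS
  have conjugator (i : ι) : ∃ σ : Equiv.Perm (Set G), ∀ x ∈ S, σ {x} = {g | r i g x} := by
    obtain ⟨σ, hσ⟩ := Equiv.Perm.exists_extending_pair (fun x : S => ({x.1} : Set G))
      (fun x : S => {g | r i g x}) (fun x y h => Subtype.ext (Set.singleton_injective h))
      (fun x y h => Subtype.ext (hrS i x x.2 y y.2 (h.subset ((r i).refl x.1))))
    exact ⟨σ, fun x hx => hσ ⟨x, hx⟩⟩
  choose σ hσ using conjugator
  obtain ⟨Φ, hΦ⟩ := hA.exists_hom fun i =>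
    (MulAut.conj (σ i)⁻¹).toMonoidHom.comp ((translationHom G).comp (A i).subtype)
  refine ⟨Φ, fun i a ha x hx z hz h => ?_⟩
  have translate_class : translationHom G a {g | r i g x} = {g | r i g z} := by
    ext g
    have := hr i a⁻¹ (inv_mem ha)
    simp only [mem_translationHom, Set.mem_ofPred_eq]
    refine ⟨fun hg => ?_, fun hg => ?_⟩
    · simpa using (r i).trans (this _ _ hg) h
    · simpa using hr i a ha _ _ ((r i).trans hg ((r i).symm h))
  simp [hΦ i ⟨a, ha⟩, hσ i x hx, translate_class, ← hσ i z hz]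

theorem IsInternalFreeProduct.subsingleton_of_separated (hA : IsInternalFreeProduct A)
    (hS : S.Finite) (hconn : ((cosetGraph A).induce S).Connected)
    (hr : ∀ i, ∀ a ∈ A i, ∀ x y, r i x y → r i (x * a) (y * a))
    (hrS : ∀ i, ∀ x ∈ S, ∀ y ∈ S, r i x y → x = y) {E : Set G} (hE : Subgroup.closure E = ⊤)
    (hES : ∀ t ∈ E, ∃ i, ∃ p ∈ S, ∃ q ∈ S, p⁻¹ * (t * q) ∈ A i ∧ r i (t * q) q) :
    S.Subsingleton := by
  obtain ⟨Φ, hΦ⟩ := hA.exists_permRep hS hr hrS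
  have adj {x y : S} (h : ((cosetGraph A).induce S).Adj x y) : Φ x {x.1} = Φ y {y.1} := by
    obtain ⟨-, i, hi⟩ := cosetGraph_adj.1 h
    have := hΦ i _ hi y y.2 x x.2 (by simp)
    rw [← this]
    simp
  have const (x y : S) : Φ x {x.1} = Φ y {y.1} := by
    obtain ⟨p⟩ := hconn.preconnected x y
    induction p with
    | nil => rfl
    | cons h _ ih => exact (adj h).trans ih
  have generators (x : S) : ∀ t ∈ E, Φ t (Φ x {x.1}) = Φ x {x.1} := by
    intro t ht
    obtain ⟨i, p, hp, q, hq, ha, htq⟩ := hES t ht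
    have hpq := hΦ i _ ha q hq p hp (by
      simpa [mul_assoc] using (r i).symm (hr i _ (inv_mem ha) _ _ htq))
    calc Φ t (Φ x {x.1}) = Φ t (Φ q {q}) := by rw [const x ⟨q, hq⟩]
      _ = Φ p (Φ (p⁻¹ * (t * q)) {q}) := by simp
      _ = Φ p {p} := by rw [hpq]
      _ = Φ x {x.1} := const ⟨p, hp⟩ x
  have fixed (x : S) (g : G) : Φ g (Φ x {x.1}) = Φ x {x.1} := by
    have le : Subgroup.closure E ≤ (MulAction.stabilizer _ (Φ x {x.1})).comap Φ :=
      (Subgroup.closure_le _).2 (generators x)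
    exact le (hE ▸ Subgroup.mem_top g)
  have eq_const (x : S) : {x.1} = Φ x {x.1} := by simpa using fixed x x⁻¹
  exact fun x hx y hy => Set.singleton_injective <|
    (eq_const ⟨x, hx⟩).trans ((const ⟨x, hx⟩ ⟨y, hy⟩).trans (eq_const ⟨y, hy⟩).symm)

end FreeProduct

/-! ### Subtrees of the tree of cosets -/

section Carrier

variable {G ι : Type*} [Group G] {A : ι → Subgroup G} {n : ℕ}

variable (A) in
/-- The coset `A i` as a vertex of the tree of cosets. The vertices of this tree are all the left
cosets of the `A i`, and an element `g` of `G` is regarded as the edge (for more than two factors,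
the star) that joins the vertices `g • basePoint A i`. -/
def basePoint (i : ι) : Σ i, G ⧸ A i := ⟨i, ((1 : G) : G ⧸ A i)⟩

theorem smul_basePoint_eq_iff {g h : G} {i : ι} :
    g • basePoint A i = h • basePoint A i ↔ g⁻¹ * h ∈ A i := by
  simp [basePoint, Sigma.smul_mk, QuotientGroup.eq]

theorem smul_basePoint_eq_self_iff {g : G} {i : ι} :
    g • basePoint A i = basePoint A i ↔ g ∈ A i := by
  simpa [eq_comm] using smul_basePoint_eq_iff (A := A) (g := 1) (h := g)

variable (A) in
/-- The vertices of the tree of cosets that lie on the edges in `S`. -/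
def vertices (S : Set G) : Set (Σ i, G ⧸ A i) := {v | ∃ g ∈ S, ∃ i, v = g • basePoint A i}

theorem smul_basePoint_mem_vertices {S : Set G} {g : G} (hg : g ∈ S) (i : ι) :
    g • basePoint A i ∈ vertices A S :=
  ⟨g, hg, i, rfl⟩

theorem exists_eq_smul_basePoint_of_adj {x y : G} (h : (cosetGraph A).Adj x y) :
    ∃ i, x • basePoint A i = y • basePoint A i :=
  (cosetGraph_adj.1 h).2.imp fun _ => smul_basePoint_eq_iff.2

variable (A) in
/-- The edges in `S` form a finite subtree of the tree of cosets that contains the base edge `1`,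
and every entry of `T` carries this subtree to one that meets it. -/
structure IsCarrier (T : Fin n → G) (S : Set G) : Prop where
  finite : S.Finite
  one_mem : 1 ∈ S
  connected : ((cosetGraph A).induce S).Connected
  movesWithin : MovesWithin T (vertices A S)

theorem exists_isCarrier [Nonempty ι] (hA : ⨆ i, A i = ⊤) (T : Fin n → G) :
    ∃ S, IsCarrier A T S := by
  classical
  obtain ⟨b⟩ := ‹Nonempty ι›
  obtain ⟨S, hTS, hS⟩ := (cosetGraph A).extend_finset_to_connected (cosetGraph_preconnected hA)
    (Finset.insert_nonempty 1 (Finset.univ.image T))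
  have one_mem : 1 ∈ S := hTS (Finset.mem_insert_self _ _)
  refine ⟨S, S.finite_toSet, one_mem, hS, fun j =>
    ⟨(1 : G) • basePoint A b, smul_basePoint_mem_vertices one_mem b, ?_⟩⟩
  rw [one_smul]
  exact smul_basePoint_mem_vertices (hTS (by simp)) b

theorem ncard_image_mul_union_lt {s t : Set G} (hs : s.Finite) (ht : t.Finite) (hst : Disjoint s t)
    {u y : G} (hy : y ∈ s) (huy : u * y ∈ t) : ((u * ·) '' s ∪ t).ncard < (s ∪ t).ncard := by
  have overlap : 0 < ((u * ·) '' s ∩ t).ncard :=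
    (Set.ncard_pos (ht.inter_of_right _)).2 ⟨_, ⟨y, hy, rfl⟩, huy⟩
  have := Set.ncard_union_add_ncard_inter ((u * ·) '' s) t (hs.image _) ht
  rw [Set.ncard_image_of_injective s (mul_right_injective u)] at this
  rw [Set.ncard_union_eq hst hs ht]
  lia

open MarkedTuple

theorem IsCarrier.exists_ncard_lt_of_partition {M : MarkedTuple G (Σ i, G ⧸ A i) n} {s t : Set G}
    (h : IsCarrier A M.entry (s ∪ t)) (hM : ∀ d, M.target d ∈ vertices A (s ∪ t))
    (hst : Disjoint s t) (hs : ((cosetGraph A).induce s).Connected)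
    (ht : ((cosetGraph A).induce t).Connected) (h_one : 1 ∈ t) {x y : G} (hx : x ∈ t)
    (hy : y ∈ s) {i : ι} (hxy : M.Folds (basePoint A i) x y) :
    ∃ T' S', NielsenEquiv M.entry T' ∧ IsCarrier A T' S' ∧ S'.ncard < (s ∪ t).ncard := by
  obtain ⟨T', hMT', hT', I, hu, hI⟩ := hxy.exists_nielsenEquiv hM
  set u := x * y⁻¹
  have huy : u * y = x := inv_mul_cancel_right x y
  have smul_mem {g : G} (hg : g ∈ s) (j : ι) :
      u • g • basePoint A j ∈ vertices A ((u * ·) '' s ∪ t) :=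
    smul_smul u g (basePoint A j) ▸ smul_basePoint_mem_vertices (.inl ⟨g, hg, rfl⟩) j
  have mem {g : G} (hg : g ∈ t) (j : ι) : g • basePoint A j ∈ vertices A ((u * ·) '' s ∪ t) :=
    smul_basePoint_mem_vertices (.inr hg) j
  obtain ⟨p, hp, q, hq, hpq⟩ := exists_adj_of_connected_induce_union h.connected hst ⟨y, hy⟩ ⟨x, hx⟩
  obtain ⟨j, hj⟩ := exists_eq_smul_basePoint_of_adj hpq
  obtain ⟨T'', hT'T'', hT''⟩ := hT'.exists_nielsenEquiv (I := I)
    (P' := vertices A ((u * ·) '' s ∪ t))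
    (by
      rintro _ ⟨g, hg | hg, k, rfl⟩
      · exact ⟨u, hu, smul_mem hg k⟩
      · exact ⟨1, Subgroup.one_mem _, by simpa using mem hg k⟩)
    (by
      intro k hk
      rcases hI k hk with hk | hk | hk
      · exact ⟨_, mem hx i, by rw [hk]; exact mem hx i⟩
      · exact ⟨_, mem hq j, by rw [hk, ← hj]; exact smul_mem hp j⟩
      · exact ⟨_, smul_mem hp j, by simpa [hk, hj] using mem hq j⟩)
  have : ((cosetGraph A).induce ((u * ·) '' s ∪ t)).Connected :=
    SimpleGraph.induce_union_connected (connected_induce_smul u hs).preconnected ht.preconnected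
      ⟨x, ⟨y, hy, huy⟩, hx⟩
  have hfin := Set.finite_union.1 h.finite
  exact ⟨T'', _, hMT'.trans hT'T'',
    ⟨(hfin.1.image _).union hfin.2, .inr h_one, this, hT''⟩,
    ncard_image_mul_union_lt hfin.1 hfin.2 hst hy (huy ▸ hx)⟩

theorem IsCarrier.exists_ncard_lt {M : MarkedTuple G (Σ i, G ⧸ A i) n} {S : Set G}
    (h : IsCarrier A M.entry S) (hM : ∀ d, M.target d ∈ vertices A S) {x y : G} (hx : x ∈ S)
    (hy : y ∈ S) (hne : x ≠ y) {i : ι} (hxy : M.Folds (basePoint A i) x y) :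
    ∃ T' S', NielsenEquiv M.entry T' ∧ IsCarrier A T' S' ∧ S'.ncard < S.ncard := by
  obtain ⟨s, t, rfl, hst, hxs, hyt, hs, ht⟩ := exists_connected_partition h.connected hx hy hne
  rcases h.one_mem with h_one | h_one
  · rw [Set.union_comm] at h hM ⊢
    exact h.exists_ncard_lt_of_partition hM hst.symm ht hs h_one hxs hyt hxy
  · exact h.exists_ncard_lt_of_partition hM hst hs ht h_one hyt hxs (M.folds_equivalence.symm hxy)

theorem IsCarrier.exists_folds (hA : IsInternalFreeProduct A)
    {M : MarkedTuple G (Σ i, G ⧸ A i) n} (hM : Subgroup.closure (Set.range M.entry) = ⊤)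
    {S : Set G} (h : IsCarrier A M.entry S) (hMS : ∀ d, M.target d ∈ vertices A S)
    (hS : S.Nontrivial) :
    ∃ i, ∃ x ∈ S, ∃ y ∈ S, x ≠ y ∧ M.Folds (basePoint A i) x y := by
  by_contra! separated
  refine Set.not_subsingleton_iff.2 hS (hA.subsingleton_of_separated h.finite h.connected
    (r := fun i => ⟨M.Folds (basePoint A i), M.folds_equivalence⟩)
    (fun i a ha x y hxy => hxy.mul_right (smul_basePoint_eq_self_iff.2 ha))
    (fun i x hx y hy hxy => by_contra fun hne => separated i x hx y hy hne hxy) hM ?_)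
  rintro _ ⟨k, rfl⟩
  obtain ⟨p, hp, i, hpi⟩ := hMS (k, true)
  obtain ⟨q, hq, j, hqj⟩ := hMS (k, false)
  have moved := M.entry_smul_target k
  rw [hpi, hqj, smul_smul] at moved
  obtain rfl : j = i := congrArg Sigma.fst moved
  exact ⟨j, p, hp, q, hq, smul_basePoint_eq_iff.1 moved.symm,
    M.folds_equivalence.symm (.single ⟨(k, true), hqj.symm, rfl⟩)⟩

theorem IsCarrier.exists_singleton (hA : IsInternalFreeProduct A) {T : Fin n → G}
    (hT : Subgroup.closure (Set.range T) = ⊤) {S : Set G} (h : IsCarrier A T S) :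
    ∃ T', NielsenEquiv T T' ∧ IsCarrier A T' {1} := by
  induction hk : S.ncard using Nat.strong_induction_on generalizing T S with
  | _ k ih =>
    rcases S.subsingleton_or_nontrivial with hS | hS
    · exact ⟨T, .refl T, hS.eq_singleton_of_mem h.one_mem ▸ h⟩
    obtain ⟨M, rfl, hM⟩ := h.movesWithin.exists_markedTuple
    obtain ⟨i, x, hx, y, hy, hne, hxy⟩ := h.exists_folds hA hT hM hS
    obtain ⟨T₁, S₁, hT₁, hS₁, hlt⟩ := h.exists_ncard_lt hM hx hy hne hxy
    obtain ⟨T', hT', h'⟩ := ih _ (hk ▸ hlt) (top_unique (hT ▸ hT₁.closure_range_le)) hS₁ rfl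
    exact ⟨T', hT₁.trans hT', h'⟩

theorem IsCarrier.exists_mem_of_singleton {T : Fin n → G} (h : IsCarrier A T {1}) (j : Fin n) :
    ∃ i, T j ∈ A i := by
  obtain ⟨_, ⟨_, rfl, i, rfl⟩, _, rfl, i', hi⟩ := h.movesWithin j
  rw [one_smul, one_smul] at hi
  obtain rfl : i = i' := congrArg Sigma.fst hi
  exact ⟨i, smul_basePoint_eq_self_iff.1 hi⟩

theorem IsInternalFreeProduct.exists_nielsenEquiv_forall_exists_mem [Nonempty ι]
    (hA : IsInternalFreeProduct A) {T : Fin n → G} (hT : Subgroup.closure (Set.range T) = ⊤) :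
    ∃ T', NielsenEquiv T T' ∧ ∀ j, ∃ i, T' j ∈ A i := by
  obtain ⟨S, hS⟩ := exists_isCarrier hA.iSup_eq_top T
  obtain ⟨T', hTT', hT'⟩ := hS.exists_singleton hA hT
  exact ⟨T', hTT', hT'.exists_mem_of_singleton⟩

end Carrier

section Coprod

open Monoid

variable (H K : Type*) [Group H] [Group K]

/-- The factors `H` (at `false`) and `K` (at `true`) of `H ∗ K`. -/
def coprodFactor : Bool → Subgroup (Coprod H K)
  | false => (Coprod.inl : H →* Coprod H K).range
  | true => (Coprod.inr : K →* Coprod H K).range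

theorem isInternalFreeProduct_coprodFactor : IsInternalFreeProduct (coprodFactor H K) := by
  let φ := CoprodI.lift fun i => (coprodFactor H K i).subtype
  let fromH : H →* coprodFactor H K false := (Coprod.inl : H →* Coprod H K).rangeRestrict
  let fromK : K →* coprodFactor H K true := (Coprod.inr : K →* Coprod H K).rangeRestrict
  let of {i : Bool} : coprodFactor H K i →* CoprodI fun i => coprodFactor H K i :=
    CoprodI.of (M := fun i => coprodFactor H K i)
  let ψ : Coprod H K →* CoprodI fun i => coprodFactor H K i :=
    Coprod.lift (of.comp fromH) (of.comp fromK)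
  have φ_of {i : Bool} (a : coprodFactor H K i) : φ (of a) = a :=
    CoprodI.lift_of (fun i => (coprodFactor H K i).subtype) a
  have ψ_inl (h : H) : ψ (Coprod.inl h) = of (fromH h) := Coprod.lift_apply_inl _ _ h
  have ψ_inr (k : K) : ψ (Coprod.inr k) = of (fromK k) := Coprod.lift_apply_inr _ _ k
  have left : ψ.comp φ = .id _ := by
    refine CoprodI.ext_hom _ _ ?_
    rintro (_ | _) <;> ext ⟨_, x, rfl⟩
    · exact (congrArg ψ (φ_of (fromH x))).trans (ψ_inl x)
    · exact (congrArg ψ (φ_of (fromK x))).trans (ψ_inr x)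
  have right : φ.comp ψ = .id _ := by
    ext x
    · exact (congrArg φ (ψ_inl x)).trans (φ_of _)
    · exact (congrArg φ (ψ_inr x)).trans (φ_of _)
  exact ⟨Function.LeftInverse.injective (DFunLike.congr_fun left),
    Function.RightInverse.surjective (DFunLike.congr_fun right)⟩

end Coprod

theorem exists_forall_lt_iff_eq_false_of_monotone {n : ℕ} {β : Fin n → Bool} (hβ : Monotone β) :
    ∃ s ≤ n, ∀ i : Fin n, (i : ℕ) < s ↔ β i = false :=
  ⟨_, card_finset_fin_le {i | β i ≤ false}, fun _ =>
    (Tuple.lt_card_le_iff_apply_le_of_monotone hβ).trans le_bot_iff⟩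

theorem grushko_nielsen_free_product_general {G ι : Type*} [Group G] [LinearOrder ι] [Nonempty ι]
    {A : ι → Subgroup G} (hA : IsInternalFreeProduct A) {n : ℕ} {T : Fin n → G}
    (hT : Subgroup.closure (Set.range T) = ⊤) :
    ∃ (T' : Fin n → G) (β : Fin n → ι), NielsenEquiv T T' ∧ Monotone β ∧ ∀ j, T' j ∈ A (β j) := by
  obtain ⟨T', hTT', hT'⟩ := hA.exists_nielsenEquiv_forall_exists_mem hT
  choose β hβ using hT'
  exact ⟨T' ∘ Tuple.sort β, β ∘ Tuple.sort β, hTT'.trans (.comp_perm T' _),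
    Tuple.monotone_sort β, fun j => hβ _⟩

/-- **Grushko's theorem.** Any generating tuple of a free product `H ∗ K` is Nielsen
equivalent to a tuple whose first `s` entries come from (the canonical image of) `H` and
whose remaining entries come from (the canonical image of) `K`. -/
theorem grushko_nielsen_free_product {H K : Type*} [Group H] [Group K] {n : ℕ}
    (T : Fin n → Monoid.Coprod H K)
    (hT : Subgroup.closure (Set.range T) = ⊤) :
    ∃ s : ℕ, s ≤ n ∧ ∃ T' : Fin n → Monoid.Coprod H K,
      NielsenEquiv T T' ∧
      (∀ i : Fin n, (i : ℕ) < s → ∃ h : H, T' i = Monoid.Coprod.inl h) ∧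
      (∀ i : Fin n, s ≤ (i : ℕ) → ∃ k : K, T' i = Monoid.Coprod.inr k) := by
  obtain ⟨T', β, hTT', hβ, hT'⟩ :=
    grushko_nielsen_free_product_general (isInternalFreeProduct_coprodFactor H K) hT
  obtain ⟨s, hsn, hs⟩ := exists_forall_lt_iff_eq_false_of_monotone hβ
  refine ⟨s, hsn, T', hTT', fun i hi => ?_, fun i hi => ?_⟩
  · exact (show T' i ∈ coprodFactor H K false from (hs i).1 hi ▸ hT' i).imp fun _ => Eq.symm
  · have : β i = true := by simpa using mt (hs i).2 hi.not_gt
    exact (show T' i ∈ coprodFactor H K true from this ▸ hT' i).imp fun _ => Eq.symm
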